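/- arXiv:1301.6616 — 2 statements merged into one kernel-verified Lean document; each statement's English description precedes it below -/
import Mathlib

section
/- For every integer r ≥ 2, consider the graph F_r on r + r(r−1)/2 nodes v_1, …, v_r and v_{ij} (1 ≤ i < j ≤ r), consisting of the clique on v_1, …, v_r together with the triangles on {v_i, v_j, v_{ij}} for each i < j, and the framework in ℝʳ given by p_{v_i} = e_i for i ∈ [r] and p_{v_{ij}} = e_i + e_j for 1 ≤ i < j ≤ r. Then the associated F_r-partial matrix a, given by a_{uv} = p_uᵀ p_v for all nodes u and edges {u,v} of F_r, admits a unique positive semidefinite completion, namely the Gram matrix of the vectors p_v; equivalently, the bar framework F_r(p) is universally completable. -/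
/-!
Let `X` be a positive semidefinite matrix agreeing with the Gram matrix of `p` on a set of nodes.
A linear relation among the vectors `p_v` of these nodes is a zero of the quadratic form of `X`,
hence lies in the kernel of `X`. Now suppose that every node `v` off a clique `B` has `p_v` in the
span of the vectors of its neighbours in `B`. Then the column of a completion `X` at `v` is the same
combination of the columns at these neighbours as for the Gram matrix, so `X` is determined by its
columns in `B`. By symmetry these are rows, whose entries are combinations of the entries in the
`B × B` block, and that block is prescribed.
-/

/- STATEMENT 17: for every r ≥ 2, the F_r-partial matrix associated to the framework
p_{v_i} = e_i, p_{v_ij} = e_i + e_j of the graph F_r (a central r-clique v_1, …, v_r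
together with the triangles {v_i, v_j, v_ij}) admits a unique psd completion, namely the
Gram matrix of the vectors p; i.e., the bar framework F_r(p) is universally completable. -/

open Matrix BigOperators

namespace Stmt17

/-- The vertices of `F_r`: the nodes `v_i`, `i ∈ [r]`, and the nodes `v_{ij}`, `i < j`. -/
abbrev Vtx (r : ℕ) := Fin r ⊕ {e : Fin r × Fin r // e.1 < e.2}

/-- The adjacency relation of `F_r`: a clique on `v_1, …, v_r`, with `v_{ij}` adjacent
exactly to `v_i` and `v_j`. -/
def adjF {r : ℕ} : Vtx r → Vtx r → Prop
  | Sum.inl i, Sum.inl j => i ≠ j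
  | Sum.inl i, Sum.inr e => i = e.1.1 ∨ i = e.1.2
  | Sum.inr e, Sum.inl i => i = e.1.1 ∨ i = e.1.2
  | Sum.inr _, Sum.inr _ => False

/-- The framework: `p_{v_i} = e_i` and `p_{v_{ij}} = e_i + e_j` in `ℝʳ`. -/
def pF (r : ℕ) : Vtx r → Fin r → ℝ
  | Sum.inl i => Pi.single i 1
  | Sum.inr e => Pi.single e.1.1 1 + Pi.single e.1.2 1

section UniversalCompletability

open scoped ComplexOrder

variable {𝕜 V E : Type*} [RCLike 𝕜] [SeminormedAddCommGroup E] [InnerProductSpace 𝕜 E]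

variable (𝕜) in
/-- The bar framework `G(p)` in an inner product space over `𝕜` is universally completable:
`gram 𝕜 p` is the only positive semidefinite matrix agreeing with it on the diagonal and on the
edges of `G`. -/
def IsUniversallyCompletable (G : SimpleGraph V) (p : V → E) : Prop :=
  ∀ X : Matrix V V 𝕜, X.PosSemidef → (∀ u, X u u = gram 𝕜 p u u) →
    (∀ u v, G.Adj u v → X u v = gram 𝕜 p u v) → X = gram 𝕜 p

variable {X : Matrix V V 𝕜} {p : V → E}

lemma mulVec_eq_zero_of_eqOn_gram [Fintype V] (hX : X.PosSemidef) {s : Set V}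
    (hs : ∀ u ∈ s, ∀ v ∈ s, X u v = gram 𝕜 p u v) {c : V → 𝕜} (hc : Function.support c ⊆ s)
    (hp : ∑ v, c v • p v = 0) : X *ᵥ c = 0 := by
  refine (hX.dotProduct_mulVec_zero_iff c).1 ?_
  calc
    star c ⬝ᵥ X *ᵥ c = star c ⬝ᵥ gram 𝕜 p *ᵥ c := by
      simp only [dotProduct, mulVec, Finset.mul_sum]
      refine Finset.sum_congr rfl fun u _ ↦ Finset.sum_congr rfl fun v _ ↦ ?_
      by_cases hu : c u = 0
      · simp [hu]
      by_cases hv : c v = 0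
      · simp [hv]
      rw [hs u (hc hu) v (hc hv)]
    _ = 0 := by rw [star_dotProduct_gram_mulVec, hp, inner_zero_left]

lemma apply_eq_mulVec_of_eqOn_gram [Fintype V] (hX : X.PosSemidef) {s : Set V} {v : V}
    (hs : ∀ a ∈ insert v s, ∀ b ∈ insert v s, X a b = gram 𝕜 p a b) {c : V → 𝕜}
    (hc : Function.support c ⊆ s) (hv : ∑ w, c w • p w = p v) (u : V) :
    X u v = (X *ᵥ c) u := by
  classical
  have hsupp : Function.support (Pi.single v 1 - c) ⊆ insert v s :=
    (Function.support_sub _ _).trans <| Set.union_subset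
      (Pi.support_single_subset.trans (by simp)) (hc.trans (Set.subset_insert v s))
  have hrel : ∑ w, (Pi.single v 1 - c : V → 𝕜) w • p w = 0 := by
    simp [sub_smul, hv, Pi.single_apply, ite_smul]
  have hker := congrFun (mulVec_eq_zero_of_eqOn_gram hX hs hsupp hrel) u
  simpa [mulVec_sub, sub_eq_zero] using hker

lemma apply_eq_gram_of_mem_span [Finite V] (hX : X.PosSemidef) {s : Set V} {v : V}
    (hs : ∀ a ∈ insert v s, ∀ b ∈ insert v s, X a b = gram 𝕜 p a b)
    (hv : p v ∈ Submodule.span 𝕜 (p '' s)) {u : V} (hu : ∀ w ∈ s, X u w = gram 𝕜 p u w) :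
    X u v = gram 𝕜 p u v := by
  have := Fintype.ofFinite V
  obtain ⟨l, hl, hlv⟩ := (Finsupp.mem_span_image_iff_linearCombination 𝕜).1 hv
  have hsupp : Function.support l ⊆ s := l.fun_support_eq.trans_subset hl
  have hsum : ∑ w, l w • p w = p v := by
    rw [← hlv, Finsupp.linearCombination_apply, Finsupp.sum_fintype _ _ (by simp)]
  rw [apply_eq_mulVec_of_eqOn_gram hX hs hsupp hsum,
    apply_eq_mulVec_of_eqOn_gram (posSemidef_gram 𝕜 p) (fun _ _ _ _ ↦ rfl) hsupp hsum]
  refine Finset.sum_congr rfl fun w _ ↦ ?_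
  by_cases hw : l w = 0
  · simp [hw]
  · exact congrArg (· * l w) (hu w (hsupp hw))

theorem isUniversallyCompletable_of_isClique [Finite V] {G : SimpleGraph V} {B : Set V}
    (hB : G.IsClique B)
    (hp : ∀ v ∉ B, p v ∈ Submodule.span 𝕜 (p '' (B ∩ G.neighborSet v))) :
    IsUniversallyCompletable 𝕜 G p := by
  intro X hX hdiag hedge
  have eqOn_clique {s : Set V} (hs : G.IsClique s) :
      ∀ a ∈ s, ∀ b ∈ s, X a b = gram 𝕜 p a b := by
    intro a ha b hb
    obtain rfl | hab := eq_or_ne a b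
    exacts [hdiag a, hedge a b (hs ha hb hab)]
  have extend {u : V} (hu : ∀ w ∈ B, X u w = gram 𝕜 p u w) (v : V) : X u v = gram 𝕜 p u v := by
    by_cases hv : v ∈ B
    · exact hu v hv
    · have hclique : G.IsClique (insert v (B ∩ G.neighborSet v)) :=
        (hB.subset Set.inter_subset_left).insert fun w hw _ ↦ hw.2
      exact apply_eq_gram_of_mem_span hX (eqOn_clique hclique) (hp v hv) fun w hw ↦ hu w hw.1
  have rows_eq (b : V) (hb : b ∈ B) (v : V) : X b v = gram 𝕜 p b v :=
    extend (eqOn_clique hB b hb) v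
  have cols_eq (u b : V) (hb : b ∈ B) : X u b = gram 𝕜 p u b := by
    rw [← hX.isHermitian.apply u b, rows_eq b hb u, (isHermitian_gram 𝕜 p).apply]
  ext u v
  exact extend (cols_eq u) v

end UniversalCompletability

/-- The graph `F_r`, bundling the adjacency relation `adjF`. -/
def graphF (r : ℕ) : SimpleGraph (Vtx r) where
  Adj := adjF
  symm := ⟨by rintro (i | e) (j | f) h <;> simp_all [adjF, eq_comm]⟩
  loopless := ⟨by rintro (_ | _) <;> simp [adjF]⟩

/-- The framework `pF` with `ℝʳ` carrying its Euclidean inner product. -/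
def frameworkF (r : ℕ) (u : Vtx r) : EuclideanSpace ℝ (Fin r) := WithLp.toLp 2 (pF r u)

lemma gram_frameworkF (r : ℕ) :
    gram ℝ (frameworkF r) = Matrix.of fun u v => pF r u ⬝ᵥ pF r v := by
  ext u v
  simp [frameworkF, EuclideanSpace.inner_toLp_toLp, dotProduct_comm]

lemma isClique_graphF_range_inl (r : ℕ) : (graphF r).IsClique (Set.range Sum.inl) := by
  rintro _ ⟨i, rfl⟩ _ ⟨j, rfl⟩ hij
  exact fun h ↦ hij (congrArg Sum.inl h)

lemma frameworkF_mem_span (r : ℕ) (v : Vtx r) (hv : v ∉ Set.range Sum.inl) :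
    frameworkF r v ∈ Submodule.span ℝ
      (frameworkF r '' (Set.range Sum.inl ∩ (graphF r).neighborSet v)) := by
  obtain i | e := v
  · exact absurd ⟨i, rfl⟩ hv
  · have mem_span (i : Fin r) (hi : i = e.1.1 ∨ i = e.1.2) : frameworkF r (Sum.inl i) ∈
        Submodule.span ℝ (frameworkF r ''
          (Set.range Sum.inl ∩ (graphF r).neighborSet (Sum.inr e))) :=
      Submodule.subset_span ⟨Sum.inl i, ⟨⟨i, rfl⟩, hi⟩, rfl⟩
    exact add_mem (mem_span e.1.1 (Or.inl rfl)) (mem_span e.1.2 (Or.inr rfl))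

theorem isUniversallyCompletable_frameworkF (r : ℕ) :
    IsUniversallyCompletable ℝ (graphF r) (frameworkF r) :=
  isUniversallyCompletable_of_isClique (isClique_graphF_range_inl r) (frameworkF_mem_span r)

theorem Fr_universally_completable (r : ℕ) (hr : 2 ≤ r) :
    ∀ X : Matrix (Vtx r) (Vtx r) ℝ, X.PosSemidef →
      (∀ u, X u u = pF r u ⬝ᵥ pF r u) →
      (∀ u v, adjF u v → X u v = pF r u ⬝ᵥ pF r v) →
      X = Matrix.of fun u v => pF r u ⬝ᵥ pF r v := by
  intro X hX hdiag hedge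
  have completion_unique := isUniversallyCompletable_frameworkF r X hX
  rw [gram_frameworkF] at completion_unique
  exact completion_unique hdiag hedge

end Stmt17
end

section
/- For every integer r ≥ 2, let G_r = (V_r, E_r) be the triangular grid graph with binom(r+1,2) vertices (i,l) for l ∈ [r] and i ∈ [r−l+1], arising as the edge graph of the subdivision of an equilateral triangle into (r−1)² congruent triangles, and consider the framework in ℝʳ given by p_{(i,1)} = e_i for i ∈ [r] and p_{(i,l)} = p_{(i,l−1)} + p_{(i+1,l−1)} for l ≥ 2 and i ∈ [r−l+1]. Then the associated G_r-partial matrix, given by the inner products p_uᵀ p_v on nodes and edges of G_r, admits a unique positive semidefinite completion; equivalently, the bar framework G_r(p) is universally completable. -/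
/- STATEMENT 18: for every r ≥ 2, the G_r-partial matrix associated to the framework
p_{(i,1)} = e_i, p_{(i,l)} = p_{(i,l-1)} + p_{(i+1,l-1)} on the triangular grid graph G_r
(the edge graph of the subdivision of an equilateral triangle into (r-1)² congruent
triangles) admits a unique psd completion; i.e., the bar framework G_r(p) is universally
completable.

Vertices are encoded 0-indexed: a vertex is a pair (i, l) with position i and level l
satisfying i + l < r (so level l carries r - l vertices); the paper's level l corresponds
to l - 1 here. Edges: (i,l) ~ (i+1,l) within a level, and (i,l+1) ~ (i,l), (i,l+1) ~
(i+1,l) between consecutive levels. -/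

open Matrix BigOperators

namespace Stmt18

/-- The vertices of the triangular grid graph `G_r` (0-indexed): pairs `(i, l)` of
position `i` and level `l` with `i + l < r`. -/
abbrev VtxT (r : ℕ) := {q : Fin r × Fin r // (q.1 : ℕ) + (q.2 : ℕ) < r}

/-- The adjacency relation of `G_r`. -/
def adjT {r : ℕ} (u v : VtxT r) : Prop :=
  ((u.1.2 : ℕ) = (v.1.2 : ℕ) ∧
      ((u.1.1 : ℕ) + 1 = (v.1.1 : ℕ) ∨ (v.1.1 : ℕ) + 1 = (u.1.1 : ℕ))) ∨
  ((u.1.2 : ℕ) + 1 = (v.1.2 : ℕ) ∧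
      ((u.1.1 : ℕ) = (v.1.1 : ℕ) ∨ (u.1.1 : ℕ) = (v.1.1 : ℕ) + 1)) ∨
  ((v.1.2 : ℕ) + 1 = (u.1.2 : ℕ) ∧
      ((v.1.1 : ℕ) = (u.1.1 : ℕ) ∨ (v.1.1 : ℕ) = (u.1.1 : ℕ) + 1))

/-- The recursively defined framework vectors: `pfun r 0 i = e_i` (bottom level) and
`pfun r (l+1) i = pfun r l i + pfun r l (i+1)`. -/
def pfun (r : ℕ) : ℕ → ℕ → Fin r → ℝ
  | 0, i => fun k => if (k : ℕ) = i then 1 else 0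
  | l + 1, i => pfun r l i + pfun r l (i + 1)

/-- The framework vector attached to a vertex of `G_r`. -/
def pT {r : ℕ} (u : VtxT r) : Fin r → ℝ := pfun r (u.1.2 : ℕ) (u.1.1 : ℕ)

/-!
If `w` lies directly above `u` and `v`, then `p_w = p_u + p_v`, so the vector `c` with entries
`1, -1, -1` at `w, u, v` lies in the kernel of the Gram matrix. As these vertices form a clique,
`cᵀ X c` involves prescribed entries only, so it vanishes, and positive semidefiniteness gives
`X c = 0`. Hence the columns of `X` obey the same recursion as the framework vectors, and
`X = Pᵀ A P`, where `P` has the framework vectors as columns and `A` is the bottom-level block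
of `X`. The diagonal of `X` now prescribes `pᵀ A p` for every framework vector `p`. These vectors
are supported on the intervals of `Fin r`, one per interval, and do not vanish at the endpoints;
induction over intervals shows that the matrices `p pᵀ` span the symmetric matrices, so `A = 1`.
-/

section IntervalVectors

variable {ι R : Type*} [LinearOrder ι]

theorem mul_mul_eq_zero_of_ne_endpoints [MulZeroClass R] {A : Matrix ι ι R} (hA : A.IsSymm)
    {s : NonemptyInterval ι} (hlt : ∀ t < s, A t.fst t.snd = 0) {w : ι → R}
    (hw : Function.support w ⊆ s) {k l : ι} (h₁ : (k, l) ≠ (s.fst, s.snd))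
    (h₂ : (k, l) ≠ (s.snd, s.fst)) : w k * (A k l * w l) = 0 := by
  have entry_eq_zero {k l : ι} (hk : k ∈ s) (hl : l ∈ s) (hkl : k ≤ l)
      (hne : (k, l) ≠ (s.fst, s.snd)) : A k l = 0 :=
    hlt ⟨(k, l), hkl⟩ <| lt_of_le_of_ne ⟨hk.1, hl.2⟩ fun h => hne (congrArg (·.toProd) h)
  by_cases hk : w k = 0
  · rw [hk, zero_mul]
  by_cases hl : w l = 0
  · rw [hl, mul_zero, mul_zero]
  have hkl : A k l = 0 := by
    rcases le_total k l with h | h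
    · exact entry_eq_zero (hw hk) (hw hl) h h₁
    · rw [← hA.apply]
      exact entry_eq_zero (hw hl) (hw hk) h fun e => h₂ (congrArg Prod.swap e)
  rw [hkl, zero_mul, mul_zero]

variable [Fintype ι] [CommSemiring R] [NoZeroDivisors R] [NeZero (2 : R)]

theorem apply_endpoints_eq_zero {A : Matrix ι ι R} (hA : A.IsSymm) {s : NonemptyInterval ι}
    (hlt : ∀ t < s, A t.fst t.snd = 0) {w : ι → R} (hw : Function.support w ⊆ s)
    (hfst : w s.fst ≠ 0) (hsnd : w s.snd ≠ 0) (h : w ⬝ᵥ A *ᵥ w = 0) :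
    A s.fst s.snd = 0 := by
  have hsum : ∑ x : ι × ι, w x.1 * (A x.1 x.2 * w x.2) = 0 := by
    simpa only [dotProduct, mulVec, Finset.mul_sum, Fintype.sum_prod_type] using h
  by_cases hs : s.fst = s.snd
  · rw [Fintype.sum_eq_single (s.fst, s.snd) fun x hx =>
      mul_mul_eq_zero_of_ne_endpoints hA hlt hw hx (by rwa [← hs] at hx ⊢)] at hsum
    simpa [hfst, hsnd] using hsum
  · rw [Fintype.sum_eq_add (s.fst, s.snd) (s.snd, s.fst)
      (fun e => hs (congrArg Prod.fst e)) fun x hx =>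
        mul_mul_eq_zero_of_ne_endpoints hA hlt hw hx.1 hx.2] at hsum
    have htwo : 2 * (w s.fst * A s.fst s.snd * w s.snd) = 0 := by
      rw [← hsum, hA.apply]
      ring
    simpa [hfst, hsnd, two_ne_zero] using htwo

theorem eq_zero_of_dotProduct_mulVec_interval_eq_zero {A : Matrix ι ι R} (hA : A.IsSymm)
    {v : NonemptyInterval ι → ι → R} (hsupp : ∀ s, Function.support (v s) ⊆ s)
    (hfst : ∀ s, v s s.fst ≠ 0) (hsnd : ∀ s, v s s.snd ≠ 0)
    (h : ∀ s, v s ⬝ᵥ A *ᵥ v s = 0) : A = 0 := by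
  have : Finite (NonemptyInterval ι) := .of_injective _ NonemptyInterval.toProd_injective
  have apply_eq_zero (s : NonemptyInterval ι) : A s.fst s.snd = 0 := by
    induction s using WellFoundedLT.induction with
    | ind s ih => exact apply_endpoints_eq_zero hA ih (hsupp s) (hfst s) (hsnd s) (h s)
  ext i j
  rcases le_total i j with hij | hji
  · exact apply_eq_zero ⟨(i, j), hij⟩
  · rw [← hA.apply]
    exact apply_eq_zero ⟨(j, i), hji⟩

end IntervalVectors

open scoped ComplexOrder in
theorem mulVec_eq_zero_of_eqOn_support {𝕜 V : Type*} [RCLike 𝕜] [Fintype V] {X Y : Matrix V V 𝕜}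
    (hX : X.PosSemidef) {c : V → 𝕜} (hXY : ∀ u v, c u ≠ 0 → c v ≠ 0 → X u v = Y u v)
    (hY : Y *ᵥ c = 0) : X *ᵥ c = 0 := by
  have hquad : star c ⬝ᵥ X *ᵥ c = star c ⬝ᵥ Y *ᵥ c := by
    simp only [dotProduct, mulVec, Finset.mul_sum]
    refine Finset.sum_congr rfl fun u _ => Finset.sum_congr rfl fun v _ => ?_
    by_cases hu : c u = 0
    · simp [hu]
    by_cases hv : c v = 0
    · simp [hv]
    rw [hXY u v hu hv]
  rw [← hX.dotProduct_mulVec_zero_iff, hquad, hY, dotProduct_zero]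

theorem pfun_apply_of_lt {r l i : ℕ} {k : Fin r} (h : (k : ℕ) < i) : pfun r l i k = 0 := by
  induction l generalizing i with
  | zero => simp [pfun, h.ne]
  | succ l ih => simp [pfun, ih h, ih (h.trans i.lt_succ_self)]

theorem pfun_apply_of_eq_add {r l i m : ℕ} {k : Fin r} (h : (k : ℕ) = i + m) :
    pfun r l i k = l.choose m := by
  induction l generalizing i m with
  | zero => cases m <;> simp [pfun, h]
  | succ l ih =>
    cases m with
    | zero => simp [pfun, ih h, pfun_apply_of_lt (h.trans_lt i.lt_succ_self)]
    | succ m =>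
      rw [pfun, Pi.add_apply, ih h, ih (i := i + 1) (m := m) (by omega), Nat.choose_succ_succ]
      push_cast
      ring

theorem support_pfun_subset (r l i : ℕ) :
    Function.support (pfun r l i) ⊆ {k | i ≤ (k : ℕ) ∧ (k : ℕ) ≤ i + l} := by
  intro k hk
  have hik : i ≤ (k : ℕ) := not_lt.1 fun h => hk (pfun_apply_of_lt h)
  obtain ⟨m, hm⟩ := Nat.exists_eq_add_of_le hik
  have hml : m ≤ l := not_lt.1 fun h =>
    hk (by rw [pfun_apply_of_eq_add hm, Nat.choose_eq_zero_of_lt h, Nat.cast_zero])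
  exact ⟨hik, by omega⟩

section TriangularGrid

variable {r : ℕ}

/-- The vertex of `G_r` at position `i` of level `l`, both 0-indexed. -/
def vtx (i l : ℕ) (h : i + l < r) : VtxT r := ⟨(⟨i, by omega⟩, ⟨l, by omega⟩), h⟩

/-- The bottom-level vertex of `G_r` at position `k`, carrying the unit vector `e_k`. -/
def baseVtx (k : Fin r) : VtxT r := vtx k 0 k.isLt

/-- The rule defining the framework vectors: the value at a vertex is the sum of the values at the
two vertices below it. -/
def IsPascal {M : Type*} [Add M] (f : VtxT r → M) : Prop :=
  ∀ i l (h : i + l + 1 < r),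
    f (vtx i (l + 1) h) = f (vtx i l (by omega)) + f (vtx (i + 1) l (by omega))

theorem IsPascal.ext {M : Type*} [Add M] {f g : VtxT r → M} (hf : IsPascal f) (hg : IsPascal g)
    (hbase : ∀ k, f (baseVtx k) = g (baseVtx k)) : f = g := by
  have eq_vtx (l i : ℕ) (h : i + l < r) : f (vtx i l h) = g (vtx i l h) := by
    induction l generalizing i with
    | zero => exact hbase ⟨i, h⟩
    | succ l ih => rw [hf i l h, hg i l h, ih, ih]
  ext1 ⟨⟨i, l⟩, h⟩
  exact eq_vtx l i h

theorem isPascal_pT : IsPascal (pT : VtxT r → Fin r → ℝ) := fun _ _ _ => rfl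

theorem pT_baseVtx (k : Fin r) : pT (baseVtx k) = Pi.single k 1 := by
  ext j
  simp [pT, baseVtx, vtx, pfun, Pi.single_apply, Fin.ext_iff]

/-- The matrix whose columns are the framework vectors, so that `Pᵀ * P` is their Gram matrix. -/
def frameworkMatrix (r : ℕ) : Matrix (Fin r) (VtxT r) ℝ := Matrix.of fun k u => pT u k

theorem col_mul_frameworkMatrix {ι : Type*} (B : Matrix ι (Fin r) ℝ) (u : VtxT r) :
    (B * frameworkMatrix r).col u = B *ᵥ pT u := rfl

theorem transpose_mul_mul_frameworkMatrix_apply (A : Matrix (Fin r) (Fin r) ℝ) (u v : VtxT r) :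
    ((frameworkMatrix r)ᵀ * A * frameworkMatrix r) u v = pT u ⬝ᵥ A *ᵥ pT v := by
  rw [dotProduct_mulVec]
  rfl

theorem isPascal_col_mul_frameworkMatrix {ι : Type*} (B : Matrix ι (Fin r) ℝ) :
    IsPascal (B * frameworkMatrix r).col := fun i l h => by
  simp only [col_mul_frameworkMatrix]
  rw [isPascal_pT i l h, mulVec_add]

theorem eq_submatrix_mul_frameworkMatrix {ι : Type*} {M : Matrix ι (VtxT r) ℝ}
    (hM : IsPascal M.col) : M = M.submatrix id baseVtx * frameworkMatrix r := by
  refine ext_col (congrFun (hM.ext (isPascal_col_mul_frameworkMatrix _) fun k => ?_))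
  rw [col_mul_frameworkMatrix, pT_baseVtx, mulVec_single_one]
  rfl

theorem eq_transpose_mul_submatrix_mul_frameworkMatrix {X : Matrix (VtxT r) (VtxT r) ℝ}
    (hX : X.IsSymm) (hcol : IsPascal X.col) :
    X = (frameworkMatrix r)ᵀ * X.submatrix baseVtx baseVtx * frameworkMatrix r := by
  have hbase : (X.submatrix id baseVtx)ᵀ = X.submatrix baseVtx baseVtx * frameworkMatrix r := by
    rw [transpose_submatrix, hX.eq]
    exact eq_submatrix_mul_frameworkMatrix fun i l h => congrArg (· ∘ baseVtx) (hcol i l h)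
  have hsymm : (X.submatrix baseVtx baseVtx).IsSymm := hX.submatrix baseVtx
  calc X = X.submatrix id baseVtx * frameworkMatrix r := eq_submatrix_mul_frameworkMatrix hcol
    _ = _ := by rw [← transpose_transpose (X.submatrix id baseVtx), hbase, transpose_mul, hsymm.eq]

open scoped ComplexOrder in
theorem isPascal_col_of_posSemidef {𝕜 : Type*} [RCLike 𝕜] {X Y : Matrix (VtxT r) (VtxT r) 𝕜}
    (hX : X.PosSemidef) (hdiag : ∀ u, X u u = Y u u) (hadj : ∀ u v, adjT u v → X u v = Y u v)
    (hY : IsPascal Y.col) : IsPascal X.col := by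
  intro i l h
  let top : VtxT r := vtx i (l + 1) h
  let left : VtxT r := vtx i l (by omega)
  let right : VtxT r := vtx (i + 1) l (by omega)
  have mulVec_relation (Z : Matrix (VtxT r) (VtxT r) 𝕜) :
      Z *ᵥ (Pi.single top 1 - (Pi.single left 1 + Pi.single right 1))
        = Z.col top - (Z.col left + Z.col right) := by
    simp only [mulVec_sub, mulVec_add, mulVec_single_one]
  refine sub_eq_zero.1 ((mulVec_relation X).symm.trans ?_)
  refine mulVec_eq_zero_of_eqOn_support hX ?_ ((mulVec_relation Y).trans (sub_eq_zero.2 (hY i l h)))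
  have mem_triangle {u : VtxT r}
      (hu : (Pi.single top 1 - (Pi.single left 1 + Pi.single right 1) : VtxT r → 𝕜) u ≠ 0) :
      u = top ∨ u = left ∨ u = right := by
    contrapose! hu
    simp [hu]
  intro u v hu hv
  rcases mem_triangle hu with rfl | rfl | rfl <;> rcases mem_triangle hv with rfl | rfl | rfl <;>
    first
    | exact hdiag _
    | exact hadj _ _ (by simp [adjT, vtx, top, left, right])

theorem eq_of_dotProduct_mulVec_pT_eq {A B : Matrix (Fin r) (Fin r) ℝ} (hA : A.IsSymm)
    (hB : B.IsSymm) (h : ∀ u : VtxT r, pT u ⬝ᵥ A *ᵥ pT u = pT u ⬝ᵥ B *ᵥ pT u) : A = B := by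
  have hle (s : NonemptyInterval (Fin r)) : (s.fst : ℕ) ≤ s.snd := s.fst_le_snd
  let u (s : NonemptyInterval (Fin r)) : VtxT r :=
    vtx s.fst (s.snd - s.fst) (by have := hle s; omega)
  refine sub_eq_zero.1 <| eq_zero_of_dotProduct_mulVec_interval_eq_zero (hA.sub hB)
    (v := fun s => pT (u s)) (fun s k hk => ?_) (fun s => ?_) (fun s => ?_) fun s => ?_
  · obtain ⟨h₁, h₂⟩ := support_pfun_subset _ _ _ hk
    exact ⟨h₁, h₂.trans_eq (Nat.add_sub_of_le (hle s))⟩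
  · simp [pT, u, vtx, pfun_apply_of_eq_add (m := 0)]
  · simp [pT, u, vtx, pfun_apply_of_eq_add (Nat.add_sub_of_le (hle s)).symm]
  · rw [sub_mulVec, dotProduct_sub, h, sub_self]

end TriangularGrid

theorem Gr_universally_completable (r : ℕ) (hr : 2 ≤ r) :
    ∀ X : Matrix (VtxT r) (VtxT r) ℝ, X.PosSemidef →
      (∀ u, X u u = pT u ⬝ᵥ pT u) →
      (∀ u v, adjT u v → X u v = pT u ⬝ᵥ pT v) →
      X = Matrix.of fun u v => pT u ⬝ᵥ pT v := by
  intro X hX hdiag hadj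
  let P := frameworkMatrix r
  let A := X.submatrix baseVtx baseVtx
  have hXsymm : X.IsSymm := by simpa [IsSymm, IsHermitian] using hX.isHermitian
  have hcol : IsPascal X.col :=
    isPascal_col_of_posSemidef (Y := Pᵀ * P) hX hdiag hadj (isPascal_col_mul_frameworkMatrix _)
  have hXA : X = Pᵀ * A * P := eq_transpose_mul_submatrix_mul_frameworkMatrix hXsymm hcol
  have hA : A = 1 := by
    refine eq_of_dotProduct_mulVec_pT_eq (hXsymm.submatrix _) isSymm_one fun u => ?_
    rw [one_mulVec, ← hdiag u, hXA, transpose_mul_mul_frameworkMatrix_apply]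
  ext u v
  rw [hXA, transpose_mul_mul_frameworkMatrix_apply, hA, one_mulVec, of_apply]

end Stmt18
end
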